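/- arXiv:2004.02223 — 2 statements merged into one kernel-verified Lean document; each statement's English description precedes it below -/
import Mathlib

section
/- Let U ⊆ ℝ⁵ be open and let Γ_{mnP} : U → ℝ be differentiable functions for internal indices m,n ∈ {4,5} and P ∈ {1,…,5}. Let G⁴⁴ = G⁵⁵ > 0 be real constants and set g := √((G⁴⁴)² + (G⁵⁵)²). Define the internal curvature components K_{mnPQ} := ∂_PΓ_{mnQ} − ∂_QΓ_{mnP} + Σ_{h∈{4,5}} G^{hh}(Γ_{mhP}Γ_{hnQ} − Γ_{hnP}Γ_{mhQ}). Define the potentials B_P := (Γ_{55P}+Γ_{44P})/√2, A³_P := (Γ_{55P}−Γ_{44P})/√2, A¹_P := (Γ_{45P}+Γ_{54P})/√2, A²_P := (Γ_{45P}−Γ_{54P})/√2, and the field strengths B_{PQ} := (K_{55PQ}+K_{44PQ})/√2, F³_{PQ} := (K_{55PQ}−K_{44PQ})/√2, F¹_{PQ} := (K_{45PQ}+K_{54PQ})/√2, F²_{PQ} := (K_{45PQ}−K_{54PQ})/√2. Then the following identities hold on U for all P,Q: B_{PQ} = ∂_PB_Q − ∂_QB_P; F³_{PQ} = ∂_PA³_Q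 − ∂_QA³_P + g(A¹_PA²_Q − A²_PA¹_Q); F¹_{PQ} = ∂_PA¹_Q − ∂_QA¹_P + g(A²_PA³_Q − A³_PA²_Q); F²_{PQ} = ∂_PA²_Q − ∂_QA²_P + g(A¹_PA³_Q − A³_PA¹_Q). -/
noncomputable section

/-- Partial derivative in the `P`-th coordinate direction of `ℝ⁵`. -/
def pd (P : Fin 5) (f : (Fin 5 → ℝ) → ℝ) (x : Fin 5 → ℝ) : ℝ :=
  fderiv ℝ f x (Pi.single P 1)

/-- Internal curvature `K_{mnPQ}` of the internal connection `Γ_{mnP}`;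
internal index `i : Fin 2` corresponds to the coordinate direction `4 + i`,
and `Ginv h` is the constant inverse-metric component `G^{hh}`. -/
def K (Ginv : Fin 2 → ℝ) (Γ : Fin 2 → Fin 2 → Fin 5 → (Fin 5 → ℝ) → ℝ)
    (m n : Fin 2) (P Q : Fin 5) (x : Fin 5 → ℝ) : ℝ :=
  pd P (Γ m n Q) x - pd Q (Γ m n P) x
    + ∑ h : Fin 2, Ginv h * (Γ m h P x * Γ h n Q x - Γ h n P x * Γ m h Q x)

/-! When `G⁴⁴ = G⁵⁵ = c`, the quadratic part of `K_{mnPQ}` is the `(m, n)` entry of the commutator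
`c [Γ_P, Γ_Q]` of `2 × 2` matrices. The potentials and the field strengths are the values of the
same four linear functionals on `Γ_P` and on `K_{PQ}`, and linear functionals commute with `∂_P`,
so only their values on a commutator matter. One of the functionals is a multiple of the trace and
kills it; the three others reproduce the structure constants of `𝔰𝔩(2, ℝ)` scaled by `√2`, whence
the coupling `√2 c = √(c² + c²)`. -/

theorem pd_linearMap_matrix {ι κ : Type*} [Finite ι] [Finite κ]
    (ℓ : Matrix ι κ ℝ →ₗ[ℝ] ℝ) {f : ι → κ → (Fin 5 → ℝ) → ℝ} {x : Fin 5 → ℝ}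
    (hf : ∀ i j, DifferentiableAt ℝ (f i j) x) (P : Fin 5) :
    pd P (fun y => ℓ (Matrix.of fun i j => f i j y)) x =
      ℓ (Matrix.of fun i j => pd P (f i j) x) := by
  cases nonempty_fintype ι
  cases nonempty_fintype κ
  have hF : HasFDerivAt (fun y i j => f i j y)
      (ContinuousLinearMap.pi fun i => ContinuousLinearMap.pi fun j => fderiv ℝ (f i j) x) x :=
    hasFDerivAt_pi.2 fun i => hasFDerivAt_pi.2 fun j => (hf i j).hasFDerivAt
  let L : (ι → κ → ℝ) →L[ℝ] ℝ :=
    (ℓ ∘ₗ (Matrix.ofLinearEquiv ℝ).toLinearMap).toContinuousLinearMap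
  exact congrArg (· (Pi.single P 1)) (L.hasFDerivAt.comp x hF).fderiv

/-- The matrix `Γ_P = (Γ_{mnP})_{m,n}` of gauge potentials in the coordinate direction `P`. -/
def connectionMatrix (Γ : Fin 2 → Fin 2 → Fin 5 → (Fin 5 → ℝ) → ℝ) (P : Fin 5)
    (x : Fin 5 → ℝ) : Matrix (Fin 2) (Fin 2) ℝ :=
  Matrix.of fun m n => Γ m n P x

/-- The matrix `K_{PQ} = (K_{mnPQ})_{m,n}` of internal curvature components. -/
def curvatureMatrix (Ginv : Fin 2 → ℝ) (Γ : Fin 2 → Fin 2 → Fin 5 → (Fin 5 → ℝ) → ℝ)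
    (P Q : Fin 5) (x : Fin 5 → ℝ) : Matrix (Fin 2) (Fin 2) ℝ :=
  Matrix.of fun m n => K Ginv Γ m n P Q x

/-- The functional sending `Γ_P` to the abelian potential `B_P` and `K_{PQ}` to `B_{PQ}`. -/
def abelianComponent : Matrix (Fin 2) (Fin 2) ℝ →ₗ[ℝ] ℝ where
  toFun M := (M 1 1 + M 0 0) / √2
  map_add' M N := by simp only [Matrix.add_apply]; ring
  map_smul' a M := by simp only [Matrix.smul_apply, smul_eq_mul, RingHom.id_apply]; ring

/-- The functional sending `Γ_P` to the potential `A¹_P` and `K_{PQ}` to `F¹_{PQ}`. -/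
@[simps]
def isospinComponent₁ : Matrix (Fin 2) (Fin 2) ℝ →ₗ[ℝ] ℝ where
  toFun M := (M 0 1 + M 1 0) / √2
  map_add' M N := by simp only [Matrix.add_apply]; ring
  map_smul' a M := by simp only [Matrix.smul_apply, smul_eq_mul, RingHom.id_apply]; ring

/-- The functional sending `Γ_P` to the potential `A²_P` and `K_{PQ}` to `F²_{PQ}`. -/
@[simps]
def isospinComponent₂ : Matrix (Fin 2) (Fin 2) ℝ →ₗ[ℝ] ℝ where
  toFun M := (M 0 1 - M 1 0) / √2
  map_add' M N := by simp only [Matrix.add_apply]; ring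
  map_smul' a M := by simp only [Matrix.smul_apply, smul_eq_mul, RingHom.id_apply]; ring

/-- The functional sending `Γ_P` to the potential `A³_P` and `K_{PQ}` to `F³_{PQ}`. -/
@[simps]
def isospinComponent₃ : Matrix (Fin 2) (Fin 2) ℝ →ₗ[ℝ] ℝ where
  toFun M := (M 1 1 - M 0 0) / √2
  map_add' M N := by simp only [Matrix.add_apply]; ring
  map_smul' a M := by simp only [Matrix.smul_apply, smul_eq_mul, RingHom.id_apply]; ring

section Commutator

variable (X Y : Matrix (Fin 2) (Fin 2) ℝ)

theorem abelianComponent_eq_trace_div : abelianComponent X = X.trace / √2 := by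
  rw [Matrix.trace_fin_two, add_comm]
  rfl

theorem abelianComponent_lie : abelianComponent ⁅X, Y⁆ = 0 := by
  rw [abelianComponent_eq_trace_div, LieRing.of_associative_ring_bracket, Matrix.trace_sub,
    Matrix.trace_mul_comm, sub_self, zero_div]

theorem isospinComponent₁_lie :
    isospinComponent₁ ⁅X, Y⁆ =
      √2 * (isospinComponent₂ X * isospinComponent₃ Y
        - isospinComponent₃ X * isospinComponent₂ Y) := by
  simp only [isospinComponent₁_apply, isospinComponent₂_apply, isospinComponent₃_apply,
    LieRing.of_associative_ring_bracket, Matrix.sub_apply, Matrix.mul_apply, Fin.sum_univ_two]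
  field_simp
  ring

theorem isospinComponent₂_lie :
    isospinComponent₂ ⁅X, Y⁆ =
      √2 * (isospinComponent₁ X * isospinComponent₃ Y
        - isospinComponent₃ X * isospinComponent₁ Y) := by
  simp only [isospinComponent₁_apply, isospinComponent₂_apply, isospinComponent₃_apply,
    LieRing.of_associative_ring_bracket, Matrix.sub_apply, Matrix.mul_apply, Fin.sum_univ_two]
  field_simp
  ring

theorem isospinComponent₃_lie :
    isospinComponent₃ ⁅X, Y⁆ =
      √2 * (isospinComponent₁ X * isospinComponent₂ Y
        - isospinComponent₂ X * isospinComponent₁ Y) := by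
  simp only [isospinComponent₁_apply, isospinComponent₂_apply, isospinComponent₃_apply,
    LieRing.of_associative_ring_bracket, Matrix.sub_apply, Matrix.mul_apply, Fin.sum_univ_two]
  field_simp
  ring

end Commutator

section Curvature

variable (c : ℝ) (Γ : Fin 2 → Fin 2 → Fin 5 → (Fin 5 → ℝ) → ℝ) (P Q : Fin 5) (x : Fin 5 → ℝ)

theorem curvatureMatrix_const :
    curvatureMatrix (fun _ => c) Γ P Q x =
      Matrix.of (fun m n => pd P (Γ m n Q) x) - Matrix.of (fun m n => pd Q (Γ m n P) x)
        + c • ⁅connectionMatrix Γ P x, connectionMatrix Γ Q x⁆ := by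
  ext m n
  simp only [curvatureMatrix, connectionMatrix, K, LieRing.of_associative_ring_bracket,
    Matrix.of_apply, Matrix.add_apply, Matrix.sub_apply, Matrix.smul_apply, Matrix.mul_apply,
    smul_eq_mul, Fin.sum_univ_two]
  ring

variable {Γ x}

theorem map_curvatureMatrix_const (hΓ : ∀ m n R, DifferentiableAt ℝ (Γ m n R) x)
    (ℓ : Matrix (Fin 2) (Fin 2) ℝ →ₗ[ℝ] ℝ) :
    ℓ (curvatureMatrix (fun _ => c) Γ P Q x) =
      pd P (fun y => ℓ (connectionMatrix Γ Q y)) x - pd Q (fun y => ℓ (connectionMatrix Γ P y)) x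
        + c * ℓ ⁅connectionMatrix Γ P x, connectionMatrix Γ Q x⁆ := by
  have pd_potential (R S : Fin 5) : pd R (fun y => ℓ (connectionMatrix Γ S y)) x =
      ℓ (Matrix.of fun m n => pd R (Γ m n S) x) :=
    pd_linearMap_matrix ℓ (fun m n => hΓ m n S) R
  rw [curvatureMatrix_const, map_add, map_sub, map_smul, smul_eq_mul, pd_potential, pd_potential]

end Curvature

theorem sqrt_sq_add_sq_self {c : ℝ} (hc : 0 ≤ c) : √(c ^ 2 + c ^ 2) = c * √2 := by
  rw [← mul_two, Real.sqrt_mul (sq_nonneg c), Real.sqrt_sq hc]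

/-- **Weak–electromagnetic field strengths take Yang–Mills form** (𝔇 = 5):
with `B_P := (Γ₅₅P+Γ₄₄P)/√2`, `A³_P := (Γ₅₅P−Γ₄₄P)/√2`, `A¹_P := (Γ₄₅P+Γ₅₄P)/√2`,
`A²_P := (Γ₄₅P−Γ₅₄P)/√2`, and `g := √((G⁴⁴)²+(G⁵⁵)²)`, the field strengths
`B_{PQ} := (K₅₅PQ+K₄₄PQ)/√2` etc. satisfy abelian and SU(2)-type identities. -/
theorem stmt_3
    (U : Set (Fin 5 → ℝ)) (hU : IsOpen U)
    (Γ : Fin 2 → Fin 2 → Fin 5 → (Fin 5 → ℝ) → ℝ)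
    (hΓ : ∀ m n P, ∀ x ∈ U, DifferentiableAt ℝ (Γ m n P) x)
    (G4 G5 : ℝ) (hGeq : G4 = G5) (hGpos : 0 < G4)
    (g : ℝ) (hg : g = Real.sqrt (G4 ^ 2 + G5 ^ 2))
    (Ginv : Fin 2 → ℝ) (hGinv : Ginv = ![G4, G5])
    (B A1 A2 A3 : Fin 5 → (Fin 5 → ℝ) → ℝ)
    (hB : ∀ P x, B P x = (Γ 1 1 P x + Γ 0 0 P x) / Real.sqrt 2)
    (hA3 : ∀ P x, A3 P x = (Γ 1 1 P x - Γ 0 0 P x) / Real.sqrt 2)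
    (hA1 : ∀ P x, A1 P x = (Γ 0 1 P x + Γ 1 0 P x) / Real.sqrt 2)
    (hA2 : ∀ P x, A2 P x = (Γ 0 1 P x - Γ 1 0 P x) / Real.sqrt 2)
    (BF F1 F2 F3 : Fin 5 → Fin 5 → (Fin 5 → ℝ) → ℝ)
    (hBF : ∀ P Q x, BF P Q x = (K Ginv Γ 1 1 P Q x + K Ginv Γ 0 0 P Q x) / Real.sqrt 2)
    (hF3 : ∀ P Q x, F3 P Q x = (K Ginv Γ 1 1 P Q x - K Ginv Γ 0 0 P Q x) / Real.sqrt 2)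
    (hF1 : ∀ P Q x, F1 P Q x = (K Ginv Γ 0 1 P Q x + K Ginv Γ 1 0 P Q x) / Real.sqrt 2)
    (hF2 : ∀ P Q x, F2 P Q x = (K Ginv Γ 0 1 P Q x - K Ginv Γ 1 0 P Q x) / Real.sqrt 2) :
    ∀ x ∈ U, ∀ P Q : Fin 5,
      BF P Q x = pd P (B Q) x - pd Q (B P) x ∧
      F3 P Q x = pd P (A3 Q) x - pd Q (A3 P) x
          + g * (A1 P x * A2 Q x - A2 P x * A1 Q x) ∧
      F1 P Q x = pd P (A1 Q) x - pd Q (A1 P) x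
          + g * (A2 P x * A3 Q x - A3 P x * A2 Q x) ∧
      F2 P Q x = pd P (A2 Q) x - pd Q (A2 P) x
          + g * (A1 P x * A3 Q x - A3 P x * A1 Q x) := by
  intro x hx P Q
  subst hGeq
  obtain rfl : Ginv = fun _ => G4 := by rw [hGinv]; ext h; fin_cases h <;> rfl
  obtain rfl : g = G4 * √2 := hg.trans (sqrt_sq_add_sq_self hGpos.le)
  obtain rfl : B = fun P x => abelianComponent (connectionMatrix Γ P x) := funext₂ hB
  obtain rfl : A1 = fun P x => isospinComponent₁ (connectionMatrix Γ P x) := funext₂ hA1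
  obtain rfl : A2 = fun P x => isospinComponent₂ (connectionMatrix Γ P x) := funext₂ hA2
  obtain rfl : A3 = fun P x => isospinComponent₃ (connectionMatrix Γ P x) := funext₂ hA3
  obtain rfl : BF = fun P Q x => abelianComponent (curvatureMatrix (fun _ => G4) Γ P Q x) :=
    funext₃ hBF
  obtain rfl : F1 = fun P Q x => isospinComponent₁ (curvatureMatrix (fun _ => G4) Γ P Q x) :=
    funext₃ hF1
  obtain rfl : F2 = fun P Q x => isospinComponent₂ (curvatureMatrix (fun _ => G4) Γ P Q x) :=
    funext₃ hF2
  obtain rfl : F3 = fun P Q x => isospinComponent₃ (curvatureMatrix (fun _ => G4) Γ P Q x) :=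
    funext₃ hF3
  have field_strength := map_curvatureMatrix_const G4 P Q fun m n R => hΓ m n R x hx
  refine ⟨?_, ?_, ?_, ?_⟩
  · simpa only [abelianComponent_lie, mul_zero, add_zero] using field_strength abelianComponent
  · simpa only [isospinComponent₃_lie, ← mul_assoc] using field_strength isospinComponent₃
  · simpa only [isospinComponent₁_lie, ← mul_assoc] using field_strength isospinComponent₁
  · simpa only [isospinComponent₂_lie, ← mul_assoc] using field_strength isospinComponent₂

end
end

section
/- Let n be a finite type, D ≥ 1, γ : Fin D → Matrix n n ℂ, let U ⊆ ℝ^D be open, let f, Y : U → ℝ be differentiable at a point x ∈ U, and let Φ_P, M : U → ℝ be arbitrary functions. Define ψ := (fun z => (f z : ℂ) · exp(i · Y z)) and ψ̄ := (fun z => (f z : ℂ) · exp(−i · Y z)). Suppose that at x the condition Σ_P ((∂_P f)(x) : ℂ) • γ_P = 0 holds. Then −ψ̄(x) • (Σ_P (i : ℂ) • (γ_P * ((∂_Pψ)(x) • 1 − (i · Φ_P(x) · ψ(x)) • 1))) + (ψ̄(x) · (M(x) : ℂ) · ψ(x)) • 1 = (f(x)² : ℂ) • (Σ_P (((∂_PY)(x)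 − Φ_P(x)) : ℂ) • γ_P + (M(x) : ℂ) • 1); equivalently, −ψ̄ Σ_P iγ_P(∂_Pψ − iΦ_Pψ) + ψ̄Mψ·1 = f²·(Σ_P(∂_PY − Φ_P)γ_P + M·1) at x. -/
noncomputable section

open Complex Matrix

/-- Partial derivative in the `P`-th coordinate direction of `ℝ^D`
(real-valued functions). -/
def pdR (D : ℕ) (P : Fin D) (f : (Fin D → ℝ) → ℝ) (x : Fin D → ℝ) : ℝ :=
  fderiv ℝ f x (Pi.single P 1)

/-- Partial derivative in the `P`-th coordinate direction of `ℝ^D`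
(complex-valued functions). -/
def pdC (D : ℕ) (P : Fin D) (f : (Fin D → ℝ) → ℂ) (x : Fin D → ℝ) : ℂ :=
  fderiv ℝ f x (Pi.single P 1)

/-- The field `f e^{iY}` with amplitude `f` and phase `Y`. Both are allowed to be complex, so that
`phaseField f (-Y)` is `f e^{-iY}`, which is the conjugate field `ψ̄` when `f` and `Y` are real. -/
def phaseField {X : Type*} (f Y : X → ℂ) : X → ℂ :=
  fun z ↦ f z * cexp (I * Y z)

theorem phaseField_neg_mul_cexp {X : Type*} (f Y : X → ℂ) (x : X) :
    phaseField f (-Y) x * cexp (I * Y x) = f x := by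
  rw [phaseField, mul_assoc, ← Complex.exp_add, Pi.neg_apply, mul_neg, neg_add_cancel,
    Complex.exp_zero, mul_one]

theorem phaseField_neg_mul_phaseField {X : Type*} (f Y : X → ℂ) (x : X) :
    phaseField f (-Y) x * phaseField f Y x = f x ^ 2 :=
  (mul_left_comm _ _ _).trans <| by rw [phaseField_neg_mul_cexp, sq]

section CovariantDerivative

variable {𝕜 E V ι : Type*} [NontriviallyNormedField 𝕜] [NormedAlgebra 𝕜 ℂ]
  [NormedAddCommGroup E] [NormedSpace 𝕜 E] [AddCommGroup V] [Module ℂ V] [Fintype ι]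

variable (𝕜) in
/-- The gauge-covariant derivative `(∂_v - iφ)ψ` at `x` in the direction `v`, where `φ` is the value
at `x` of the component of the gauge potential along `v`. -/
def covariantDeriv (φ : ℂ) (ψ : E → ℂ) (x v : E) : ℂ :=
  fderiv 𝕜 ψ x v - I * φ * ψ x

theorem fderiv_phaseField_apply {f Y : E → ℂ} {x : E}
    (hf : DifferentiableAt 𝕜 f x) (hY : DifferentiableAt 𝕜 Y x) (v : E) :
    fderiv 𝕜 (phaseField f Y) x v =
      fderiv 𝕜 f x v * cexp (I * Y x) + I * fderiv 𝕜 Y x v * phaseField f Y x := by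
  have hderiv : HasFDerivAt (phaseField f Y) _ x :=
    hf.hasFDerivAt.mul (hY.hasFDerivAt.const_mul I).cexp
  rw [hderiv.fderiv]
  simp only [phaseField, _root_.add_apply, _root_.smul_apply, smul_eq_mul]
  ring

theorem covariantDeriv_phaseField {f Y : E → ℂ} {x : E}
    (hf : DifferentiableAt 𝕜 f x) (hY : DifferentiableAt 𝕜 Y x) (φ : ℂ) (v : E) :
    covariantDeriv 𝕜 φ (phaseField f Y) x v =
      fderiv 𝕜 f x v * cexp (I * Y x) + I * (fderiv 𝕜 Y x v - φ) * phaseField f Y x := by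
  rw [covariantDeriv, fderiv_phaseField_apply hf hY]
  ring

theorem phaseField_neg_mul_covariantDeriv {f Y : E → ℂ} {x : E}
    (hf : DifferentiableAt 𝕜 f x) (hY : DifferentiableAt 𝕜 Y x) (φ : ℂ) (v : E) :
    phaseField f (-Y) x * covariantDeriv 𝕜 φ (phaseField f Y) x v =
      f x * fderiv 𝕜 f x v + I * f x ^ 2 * (fderiv 𝕜 Y x v - φ) := by
  rw [covariantDeriv_phaseField hf hY]
  linear_combination fderiv 𝕜 f x v * phaseField_neg_mul_cexp f Y x +
    I * (fderiv 𝕜 Y x v - φ) * phaseField_neg_mul_phaseField f Y x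

theorem neg_phaseField_neg_smul_sum_covariantDeriv {f Y : E → ℂ} {x : E}
    (hf : DifferentiableAt 𝕜 f x) (hY : DifferentiableAt 𝕜 Y x)
    (φ : ι → ℂ) (v : ι → E) (γ : ι → V) :
    -phaseField f (-Y) x • ∑ P, (I * covariantDeriv 𝕜 (φ P) (phaseField f Y) x (v P)) • γ P =
      -(I * f x) • ∑ P, fderiv 𝕜 f x (v P) • γ P +
        f x ^ 2 • ∑ P, (fderiv 𝕜 Y x (v P) - φ P) • γ P := by
  simp only [Finset.smul_sum, smul_smul, ← Finset.sum_add_distrib, ← add_smul]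
  refine Finset.sum_congr rfl fun P _ ↦ congrArg (· • γ P) ?_
  linear_combination -I * phaseField_neg_mul_covariantDeriv hf hY (φ P) (v P) -
    f x ^ 2 * (fderiv 𝕜 Y x (v P) - φ P) * I_sq

/-- In an algebra `V` one takes `e = 1`; for a space `V` of spinors, `γ P` and `e` stand for
`γ_P χ` and `χ` with `χ` a fixed spinor. -/
theorem stmt_11_general {f Y : E → ℂ} {x : E}
    (hf : DifferentiableAt 𝕜 f x) (hY : DifferentiableAt 𝕜 Y x)
    (φ : ι → ℂ) (m : ℂ) (v : ι → E) (γ : ι → V) (e : V)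
    (hcond : ∑ P, fderiv 𝕜 f x (v P) • γ P = 0) :
    -phaseField f (-Y) x • ∑ P, (I * covariantDeriv 𝕜 (φ P) (phaseField f Y) x (v P)) • γ P +
        (phaseField f (-Y) x * m * phaseField f Y x) • e =
      f x ^ 2 • (∑ P, (fderiv 𝕜 Y x (v P) - φ P) • γ P + m • e) := by
  rw [neg_phaseField_neg_smul_sum_covariantDeriv hf hY, hcond, smul_zero, zero_add, smul_add,
    smul_smul, mul_right_comm, phaseField_neg_mul_phaseField]

end CovariantDerivative

theorem hasFDerivAt_ofReal_comp {E : Type*} [NormedAddCommGroup E] [NormedSpace ℝ E]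
    {f : E → ℝ} {f' : E →L[ℝ] ℝ} {x : E} (hf : HasFDerivAt f f' x) :
    HasFDerivAt (fun z ↦ (f z : ℂ)) (ofRealCLM ∘L f') x :=
  ofRealCLM.hasFDerivAt.comp x hf

/-- **Dirac-Lagrangian form of the affine action** (pointwise identity):
with `ψ := f e^{iY}`, `ψ̄ := f e^{−iY}`, and `Σ_P (∂_P f)(x) • γ_P = 0`,
`−ψ̄ Σ_P iγ_P(∂_Pψ − iΦ_Pψ) + ψ̄Mψ·1 = f²·(Σ_P(∂_PY − Φ_P)γ_P + M·1)` at `x`. -/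
theorem stmt_11 (n : Type*) [Fintype n] [DecidableEq n]
    (D : ℕ) (hD : 1 ≤ D) (γ : Fin D → Matrix n n ℂ)
    (U : Set (Fin D → ℝ)) (hU : IsOpen U) (x : Fin D → ℝ) (hx : x ∈ U)
    (f Y : (Fin D → ℝ) → ℝ)
    (hf : DifferentiableAt ℝ f x) (hY : DifferentiableAt ℝ Y x)
    (Φ : Fin D → (Fin D → ℝ) → ℝ) (M : (Fin D → ℝ) → ℝ)
    (ψ ψb : (Fin D → ℝ) → ℂ)
    (hψ : ψ = fun z => (f z : ℂ) * Complex.exp (Complex.I * (Y z : ℂ)))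
    (hψb : ψb = fun z => (f z : ℂ) * Complex.exp (-Complex.I * (Y z : ℂ)))
    (hcond : ∑ P, ((pdR D P f x : ℝ) : ℂ) • γ P = 0) :
    -(ψb x) • (∑ P, (Complex.I) • (γ P *
        ((pdC D P ψ x) • (1 : Matrix n n ℂ)
          - (Complex.I * (Φ P x : ℂ) * ψ x) • (1 : Matrix n n ℂ))))
      + (ψb x * (M x : ℂ) * ψ x) • (1 : Matrix n n ℂ)
    = (((f x) ^ 2 : ℝ) : ℂ) •
        (∑ P, (((pdR D P Y x - Φ P x : ℝ)) : ℂ) • γ P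
          + ((M x : ℝ) : ℂ) • (1 : Matrix n n ℂ)) := by
  have hfC := hasFDerivAt_ofReal_comp hf.hasFDerivAt
  have hYC := hasFDerivAt_ofReal_comp hY.hasFDerivAt
  have hψ_phase : ψ = phaseField (fun z ↦ (f z : ℂ)) (fun z ↦ (Y z : ℂ)) := hψ
  have hψb_phase : ψb x = phaseField (fun z ↦ (f z : ℂ)) (-fun z ↦ (Y z : ℂ)) x := by
    simp [hψb, phaseField]
  rw [hψ_phase, hψb_phase]
  simpa [covariantDeriv, pdR, pdC, hYC.fderiv, ← sub_smul, smul_smul] using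
    stmt_11_general hfC.differentiableAt hYC.differentiableAt (Φ · x) (M x) (Pi.single · 1) γ 1
      (by simpa [pdR, hfC.fderiv] using hcond)

end
end
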